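/- Let 0 < ε ≤ 1, T > 0 and M > 0. Let ζ₁, v₁ : [0,T] × ℝ → ℝ be smooth functions solving the standard Boussinesq system exactly: ∂_t ζ₁ + ∂_x((1+εζ₁)v₁) = 0 and ∂_t v₁ − (ε/3)∂_x²∂_t v₁ + ∂_x ζ₁ + ε v₁ ∂_x v₁ = 0 at every point. Let ζ₂⁰, v₂⁰ : ℝ → ℝ be smooth, set f = ∂_x ζ₁ · ∂_x∂_t v₁ + (2/3)·ζ₁·∂_x²∂_t v₁ + (1/45)·∂_x⁴∂_t v₁ + (1/3)·∂_x(v₁·∂_x²v₁ − (∂_x v₁)²), and define ζ₂(t,x) = (1/2)[(ζ₂⁰+v₂⁰)(x−t) + (ζ₂⁰−v₂⁰)(x+t) + ∫₀ᵗ f(s,x−t+s) ds − ∫₀ᵗ f(s,x+t−s) ds] and v₂(t,x) = (1/2)[(ζ₂⁰+v₂⁰)(x−t) − (ζ₂⁰−v₂⁰)(x+t) + ∫₀ᵗ f(s,x−t+s) ds + ∫₀ᵗ f(s,x+t−s) ds]. Set ζ = ζ₁ + ε²ζ₂ and v = v₁ + ε²v₂ and assume all partial derivatives in t and x of ζ₁,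 v₁, ζ₂, v₂ of total order ≤ 6 are bounded in absolute value by M on [0,T] × ℝ, and 1 + ε·ζ ≥ 1/2 on [0,T] × ℝ. Then ζ(0,x) = ζ₁(0,x) + ε²ζ₂⁰(x), v(0,x) = v₁(0,x) + ε²v₂⁰(x), and there exists a constant C > 0 depending only on M such that for all (t,x) ∈ [0,T] × ℝ: |∂_t ζ + ∂_x((1+εζ)v)| ≤ C·ε³ and |∂_t v − (ε/(3(1+εζ)))·∂_x((1+3εζ)·∂_x∂_t v) − (ε²/45)·∂_x⁴∂_t v + ∂_x ζ + ε v ∂_x v − (ε²/3)·∂_x(v·∂_x²v − (∂_x v)²)| ≤ C·ε³. -/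

import Mathlib

/-- Partial derivative with respect to the first (time) variable. -/
noncomputable def pt (u : ℝ → ℝ → ℝ) : ℝ → ℝ → ℝ := fun t x => deriv (fun s => u s x) t

/-- Partial derivative with respect to the second (space) variable. -/
noncomputable def px (u : ℝ → ℝ → ℝ) : ℝ → ℝ → ℝ := fun t x => deriv (fun y => u t y) x


open scoped ContDiff

lemma contDiff_param_integral (n : ℕ) : ∀ (E : Type) [NormedAddCommGroup E] [NormedSpace ℝ E]
    [CompleteSpace E] (F : (ℝ × ℝ) → ℝ → E), ContDiff ℝ n (Function.uncurry F) →
    ContDiff ℝ n (fun p => ∫ u in (0:ℝ)..1, F p u) := by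
  induction n with
  | zero =>
    intro E _ _ _ F hF
    have hF' : Continuous (Function.uncurry F) := hF.continuous
    have := intervalIntegral.continuous_parametric_intervalIntegral_of_continuous'
      (μ := MeasureTheory.volume) hF' 0 1
    exact_mod_cast (contDiff_zero (𝕜 := ℝ)).2 this
  | succ n ih =>
    intro E _ _ _ F hF
    have h1 : ContDiff ℝ n (fderiv ℝ (Function.uncurry F)) :=
      hF.fderiv_right (by norm_cast)
    let F' : (ℝ × ℝ) → ℝ → ((ℝ × ℝ) →L[ℝ] E) := fun p u =>
      (fderiv ℝ (Function.uncurry F) (p, u)).comp (ContinuousLinearMap.inl ℝ (ℝ × ℝ) ℝ)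
    have hF' : ContDiff ℝ n (Function.uncurry F') := by
      have : Function.uncurry F' = fun q => (fderiv ℝ (Function.uncurry F) q).comp
          (ContinuousLinearMap.inl ℝ (ℝ × ℝ) ℝ) := by
        ext ⟨p, u⟩ <;> rfl
      rw [this]
      exact h1.clm_comp contDiff_const
    have hcF : Continuous (Function.uncurry F) := hF.continuous
    have hcF' : Continuous (Function.uncurry F') := hF'.continuous
    have hdF : Differentiable ℝ (Function.uncurry F) := hF.differentiable (by simp)
    push_cast
    rw [contDiff_succ_iff_hasFDerivAt]
    refine ⟨fun p => ∫ u in (0:ℝ)..1, F' p u, ih _ F' hF', fun p => ?_⟩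
    obtain ⟨C, hC⟩ := ((isCompact_closedBall p 1).prod (isCompact_Icc (a := (0:ℝ)) (b := 1))
      ).exists_bound_of_continuousOn hcF'.continuousOn
    have cF : ∀ p, Continuous (F p) := fun p => hcF.comp (by fun_prop : Continuous fun u => (p, u))
    have cF' : ∀ p, Continuous (F' p) :=
      fun p => hcF'.comp (by fun_prop : Continuous fun u => (p, u))
    refine intervalIntegral.hasFDerivAt_integral_of_dominated_of_fderiv_le
      (s := Metric.closedBall p 1) (bound := fun _ => C)
      (Metric.closedBall_mem_nhds p one_pos)
      (Filter.Eventually.of_forall fun p => (cF p).aestronglyMeasurable)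
      ((cF p).intervalIntegrable _ _) (cF' p).aestronglyMeasurable
      (Filter.Eventually.of_forall fun u hu q hq => ?_)
      (continuous_const.intervalIntegrable _ _)
      (Filter.Eventually.of_forall fun u hu q hq => ?_)
    · have hu' : u ∈ Set.Icc (0:ℝ) 1 := by
        rw [Set.uIoc_of_le zero_le_one] at hu
        exact ⟨hu.1.le, hu.2⟩
      exact hC (q, u) ⟨hq, hu'⟩
    · have := (hdF (q, u)).hasFDerivAt
      exact HasFDerivAt.comp (f := fun e : ℝ × ℝ => (e, u)) q this (hasFDerivAt_prodMk_left (𝕜 := ℝ) q u)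

lemma contDiff_integral_upper (φ : ℝ → ℝ → ℝ) (hφ : ContDiff ℝ ∞ (Function.uncurry φ)) :
    ContDiff ℝ ∞ (fun p : ℝ × ℝ => ∫ s in (0:ℝ)..p.1, φ s p.2) := by
  have h : (fun p : ℝ × ℝ => ∫ s in (0:ℝ)..p.1, φ s p.2) =
      fun p : ℝ × ℝ => p.1 * ∫ u in (0:ℝ)..1, φ (p.1 * u) p.2 := by
    ext p
    have := intervalIntegral.mul_integral_comp_mul_left (a := 0) (b := 1)
      (f := fun s => φ s p.2) (c := p.1)
    rw [this]
    simp
  rw [h]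
  refine contDiff_fst.mul (contDiff_infty.2 fun n => ?_)
  refine contDiff_param_integral n ℝ (fun p u => φ (p.1 * u) p.2) ?_
  have : ContDiff ℝ ∞ (Function.uncurry (fun (p : ℝ × ℝ) (u : ℝ) => φ (p.1 * u) p.2)) :=
    hφ.comp (by fun_prop : ContDiff ℝ ∞ fun q : (ℝ × ℝ) × ℝ => (q.1.1 * q.2, q.1.2))
  exact this.of_le (by exact_mod_cast le_top)

/-- Smoothness of a curried function. -/
def Sm (u : ℝ → ℝ → ℝ) : Prop := ContDiff ℝ ∞ (Function.uncurry u)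

lemma Sm.hasFDerivAt {u : ℝ → ℝ → ℝ} (h : Sm u) (p : ℝ × ℝ) :
    HasFDerivAt (Function.uncurry u) (fderiv ℝ (Function.uncurry u) p) p :=
  (h.differentiable (by simp) p).hasFDerivAt

lemma Sm.hpx {u : ℝ → ℝ → ℝ} (h : Sm u) (t x : ℝ) :
    HasDerivAt (fun y => u t y) (fderiv ℝ (Function.uncurry u) (t, x) (0, 1)) x := by
  have h2 : HasDerivAt (fun y : ℝ => (t, y)) ((0:ℝ), (1:ℝ)) x :=
    (hasDerivAt_const x t).prodMk (hasDerivAt_id x)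
  exact (h.hasFDerivAt (t, x)).comp_hasDerivAt x h2

lemma Sm.hpt {u : ℝ → ℝ → ℝ} (h : Sm u) (t x : ℝ) :
    HasDerivAt (fun s => u s x) (fderiv ℝ (Function.uncurry u) (t, x) (1, 0)) t := by
  have h2 : HasDerivAt (fun y : ℝ => (y, x)) ((1:ℝ), (0:ℝ)) t :=
    (hasDerivAt_id t).prodMk (hasDerivAt_const t x)
  exact (h.hasFDerivAt (t, x)).comp_hasDerivAt t h2

lemma Sm.px_eq {u : ℝ → ℝ → ℝ} (h : Sm u) :
    px u = fun t x => fderiv ℝ (Function.uncurry u) (t, x) (0, 1) := by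
  ext t x; exact (h.hpx t x).deriv

lemma Sm.pt_eq {u : ℝ → ℝ → ℝ} (h : Sm u) :
    pt u = fun t x => fderiv ℝ (Function.uncurry u) (t, x) (1, 0) := by
  ext t x; exact (h.hpt t x).deriv

lemma Sm.hasx {u : ℝ → ℝ → ℝ} (h : Sm u) (t x : ℝ) :
    HasDerivAt (fun y => u t y) (px u t x) x := (h.hpx t x).differentiableAt.hasDerivAt

lemma Sm.hast {u : ℝ → ℝ → ℝ} (h : Sm u) (t x : ℝ) :
    HasDerivAt (fun s => u s x) (pt u t x) t := (h.hpt t x).differentiableAt.hasDerivAt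

lemma Sm.px {u : ℝ → ℝ → ℝ} (h : Sm u) : Sm (px u) := by
  rw [h.px_eq]
  have : ContDiff ℝ ∞ (fderiv ℝ (Function.uncurry u)) := h.fderiv_right (by simp)
  exact this.clm_apply contDiff_const

lemma Sm.pt {u : ℝ → ℝ → ℝ} (h : Sm u) : Sm (pt u) := by
  rw [h.pt_eq]
  have : ContDiff ℝ ∞ (fderiv ℝ (Function.uncurry u)) := h.fderiv_right (by simp)
  exact this.clm_apply contDiff_const

lemma Sm.add {u v : ℝ → ℝ → ℝ} (h : Sm u) (k : Sm v) : Sm (fun t x => u t x + v t x) :=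
  ContDiff.add h k
lemma Sm.sub {u v : ℝ → ℝ → ℝ} (h : Sm u) (k : Sm v) : Sm (fun t x => u t x - v t x) :=
  ContDiff.sub h k
lemma Sm.mul {u v : ℝ → ℝ → ℝ} (h : Sm u) (k : Sm v) : Sm (fun t x => u t x * v t x) :=
  ContDiff.mul h k
lemma Sm.pow {u : ℝ → ℝ → ℝ} (h : Sm u) (n : ℕ) : Sm (fun t x => u t x ^ n) :=
  ContDiff.pow h n
lemma Sm.const (c : ℝ) : Sm (fun _ _ => c) := contDiff_const

/-- Bounds on derivatives at a point. -/
def Bd (M : ℝ) (n : ℕ) (p : ℝ × ℝ) (u : ℝ → ℝ → ℝ) : Prop :=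
  ∀ k ≤ n, ‖iteratedFDeriv ℝ k (Function.uncurry u) p‖ ≤ M

lemma Bd.abs_le {M : ℝ} {n : ℕ} {t x : ℝ} {u : ℝ → ℝ → ℝ} (h : Bd M n (t, x) u) :
    |u t x| ≤ M := by
  have := h 0 (Nat.zero_le _)
  rwa [norm_iteratedFDeriv_zero] at this

lemma Bd.dir {M : ℝ} {n : ℕ} {p : ℝ × ℝ} {u w : ℝ → ℝ → ℝ} (h : Bd M (n + 1) p u) (hu : Sm u)
    (e : ℝ × ℝ) (he : ‖e‖ ≤ 1)
    (hw : w = fun t x => fderiv ℝ (Function.uncurry u) (t, x) e) : Bd M n p w := by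
  intro k hk
  have h1 : ContDiff ℝ ∞ (fderiv ℝ (Function.uncurry u)) := hu.fderiv_right (by simp)
  have h2 : Function.uncurry w =
      (ContinuousLinearMap.apply ℝ ℝ e) ∘ fderiv ℝ (Function.uncurry u) := by
    subst hw; ext ⟨t, x⟩; rfl
  rw [h2]
  have h3 := (ContinuousLinearMap.apply ℝ ℝ e).norm_iteratedFDeriv_comp_left
    (n := k) (x := p) (h1.contDiffAt) (by exact_mod_cast le_top)
  rw [norm_iteratedFDeriv_fderiv] at h3
  have h4 : ‖(ContinuousLinearMap.apply ℝ ℝ e : ((ℝ × ℝ) →L[ℝ] ℝ) →L[ℝ] ℝ)‖ ≤ 1 := by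
    refine ContinuousLinearMap.opNorm_le_bound _ zero_le_one fun f => ?_
    rw [one_mul]
    calc ‖f e‖ ≤ ‖f‖ * ‖e‖ := f.le_opNorm e
      _ ≤ ‖f‖ * 1 := by gcongr
      _ = ‖f‖ := mul_one _
  refine h3.trans ((mul_le_of_le_one_left (norm_nonneg _) h4).trans (h (k+1) (by omega)))

lemma Bd.px {M : ℝ} {n : ℕ} {p : ℝ × ℝ} {u : ℝ → ℝ → ℝ} (h : Bd M (n + 1) p u) (hu : Sm u) :
    Bd M n p (px u) := h.dir hu (0, 1) (by simp [Prod.norm_def]) hu.px_eq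

lemma Bd.pt {M : ℝ} {n : ℕ} {p : ℝ × ℝ} {u : ℝ → ℝ → ℝ} (h : Bd M (n + 1) p u) (hu : Sm u) :
    Bd M n p (pt u) := h.dir hu (1, 0) (by simp [Prod.norm_def]) hu.pt_eq

lemma px_lin {u v : ℝ → ℝ → ℝ} (hu : Sm u) (hv : Sm v) (c : ℝ) :
    px (fun t x => u t x + c * v t x) = fun t x => px u t x + c * px v t x := by
  ext t x; exact ((hu.hasx t x).add ((hv.hasx t x).const_mul c)).deriv

lemma pt_lin {u v : ℝ → ℝ → ℝ} (hu : Sm u) (hv : Sm v) (c : ℝ) :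
    pt (fun t x => u t x + c * v t x) = fun t x => pt u t x + c * pt v t x := by
  ext t x; exact ((hu.hast t x).add ((hv.hast t x).const_mul c)).deriv

lemma px_flux {z v : ℝ → ℝ → ℝ} (hz : Sm z) (hv : Sm v) (c t x : ℝ) :
    px (fun t x => (1 + c * z t x) * v t x) t x =
      c * px z t x * v t x + (1 + c * z t x) * px v t x :=
  ((((hz.hasx t x).const_mul c).const_add 1).mul (hv.hasx t x)).deriv

lemma px_Q {v : ℝ → ℝ → ℝ} (hv : Sm v) (t x : ℝ) :
    px (fun t x => v t x * px (px v) t x - (px v t x) ^ 2) t x =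
      v t x * px (px (px v)) t x - px v t x * px (px v) t x := by
  have := (((hv.hasx t x).mul (hv.px.px.hasx t x)).sub ((hv.px.hasx t x).pow 2)).deriv
  refine this.trans ?_
  push_cast
  ring

/-- Forward characteristic integral. -/
lemma char_fwd (f : ℝ → ℝ → ℝ) (hf : Sm f) (c : ℝ) :
    Sm (fun t x => ∫ s in (0:ℝ)..t, f s (x - c * t + c * s)) ∧
    ∀ t x, pt (fun t x => ∫ s in (0:ℝ)..t, f s (x - c * t + c * s)) t x =
      f t x - c * px (fun t x => ∫ s in (0:ℝ)..t, f s (x - c * t + c * s)) t x := by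
  have hφ : ContDiff ℝ ∞ (Function.uncurry fun s y => f s (y + c * s)) :=
    ContDiff.comp (g := Function.uncurry f) hf
      (by fun_prop : ContDiff ℝ ∞ fun q : ℝ × ℝ => (q.1, q.2 + c * q.1))
  have hgs := contDiff_integral_upper _ hφ
  set g : ℝ → ℝ → ℝ := fun τ y => ∫ s in (0:ℝ)..τ, f s (y + c * s) with hg
  have hgS : Sm g := hgs
  have hS : Sm (fun t x => g t (x - c * t)) :=
    ContDiff.comp (g := Function.uncurry g) hgS
      (by fun_prop : ContDiff ℝ ∞ fun q : ℝ × ℝ => (q.1, q.2 - c * q.1))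
  refine ⟨hS, fun t x => ?_⟩
  change _root_.pt (fun t x => g t (x - c * t)) t x
    = f t x - c * _root_.px (fun t x => g t (x - c * t)) t x
  set L := fderiv ℝ (Function.uncurry g) (t, x - c * t) with hL
  have hD : HasFDerivAt (Function.uncurry g) L (t, x - c * t) := hgS.hasFDerivAt _
  have e1 : HasDerivAt (fun s => g s (x - c * s)) (L (1, -c)) t := by
    have h2 : HasDerivAt (fun s : ℝ => (s, x - c * s)) ((1:ℝ), (-c:ℝ)) t := by
      refine (hasDerivAt_id t).prodMk ?_
      simpa using ((hasDerivAt_id t).const_mul c).const_sub x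
    exact hD.comp_hasDerivAt t h2
  have e2 : HasDerivAt (fun y => g t (y - c * t)) (L (0, 1)) x := by
    have h2 : HasDerivAt (fun y : ℝ => (t, y - c * t)) ((0:ℝ), (1:ℝ)) x :=
      (hasDerivAt_const x t).prodMk ((hasDerivAt_id x).sub_const _)
    exact hD.comp_hasDerivAt x h2
  have e3 : HasDerivAt (fun s => g s (x - c * t)) (L (1, 0)) t := hgS.hpt _ _
  have hc : Continuous fun s => f s (x - c * t + c * s) :=
    hφ.continuous.comp (by fun_prop : Continuous fun s : ℝ => (s, x - c * t))
  have e4 : HasDerivAt (fun s => g s (x - c * t)) (f t (x - c * t + c * t)) t :=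
    intervalIntegral.integral_hasDerivAt_right (hc.intervalIntegrable _ _)
      hc.stronglyMeasurable.stronglyMeasurableAtFilter hc.continuousAt
  have e5 := e3.unique e4
  rw [sub_add_cancel] at e5
  have e6 : L (1, -c) = L (1, 0) - c * L (0, 1) := by
    have : ((1:ℝ), -c) = (1, 0) - c • ((0:ℝ), (1:ℝ)) := by ext <;> simp
    rw [this, map_sub, map_smul, smul_eq_mul]
  unfold _root_.pt _root_.px
  rw [e1.deriv, e2.deriv, e6, e5]

lemma char_one (f : ℝ → ℝ → ℝ) (hf : Sm f) :
    Sm (fun t x => ∫ s in (0:ℝ)..t, f s (x - t + s)) ∧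
    ∀ t x, pt (fun t x => ∫ s in (0:ℝ)..t, f s (x - t + s)) t x =
      f t x - px (fun t x => ∫ s in (0:ℝ)..t, f s (x - t + s)) t x := by
  have h := char_fwd f hf 1
  simpa only [one_mul] using h

lemma char_neg (f : ℝ → ℝ → ℝ) (hf : Sm f) :
    Sm (fun t x => ∫ s in (0:ℝ)..t, f s (x + t - s)) ∧
    ∀ t x, pt (fun t x => ∫ s in (0:ℝ)..t, f s (x + t - s)) t x =
      f t x + px (fun t x => ∫ s in (0:ℝ)..t, f s (x + t - s)) t x := by
  have h := char_fwd f hf (-1)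
  have e : ∀ t x s : ℝ, x - -1 * t + -1 * s = x + t - s := fun t x s => by ring
  simp only [e] at h
  refine ⟨h.1, fun t x => ?_⟩
  rw [h.2]
  ring

/-- The explicit formulas solve the forced linear wave system. -/
lemma dalembert (f : ℝ → ℝ → ℝ) (hf : Sm f) (z w : ℝ → ℝ) (hz : ContDiff ℝ ∞ z)
    (hw : ContDiff ℝ ∞ w) (Z V : ℝ → ℝ → ℝ)
    (hZ : Z = fun t x => (1 / 2) * ((z (x - t) + w (x - t)) + (z (x + t) - w (x + t))
          + (∫ s in (0:ℝ)..t, f s (x - t + s)) - ∫ s in (0:ℝ)..t, f s (x + t - s)))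
    (hV : V = fun t x => (1 / 2) * ((z (x - t) + w (x - t)) - (z (x + t) - w (x + t))
          + (∫ s in (0:ℝ)..t, f s (x - t + s)) + ∫ s in (0:ℝ)..t, f s (x + t - s))) :
    Sm Z ∧ Sm V ∧ (∀ t x, pt Z t x + px V t x = 0) ∧ (∀ t x, pt V t x + px Z t x = f t x) := by
  obtain ⟨hG, hGt⟩ := char_one f hf
  obtain ⟨hH, hHt⟩ := char_neg f hf
  set G : ℝ → ℝ → ℝ := fun t x => ∫ s in (0:ℝ)..t, f s (x - t + s) with hGdef
  set H : ℝ → ℝ → ℝ := fun t x => ∫ s in (0:ℝ)..t, f s (x + t - s) with hHdef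
  have hZ' : Z = fun t x => (1 / 2) * ((z (x - t) + w (x - t)) + (z (x + t) - w (x + t))
          + G t x - H t x) := hZ
  have hV' : V = fun t x => (1 / 2) * ((z (x - t) + w (x - t)) - (z (x + t) - w (x + t))
          + G t x + H t x) := hV
  have h1 : Sm (fun t x => z (x - t) + w (x - t)) :=
    ContDiff.comp (g := fun y => z y + w y) (hz.add hw)
      (by fun_prop : ContDiff ℝ ∞ fun q : ℝ × ℝ => q.2 - q.1)
  have h2 : Sm (fun t x => z (x + t) - w (x + t)) :=
    ContDiff.comp (g := fun y => z y - w y) (hz.sub hw)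
      (by fun_prop : ContDiff ℝ ∞ fun q : ℝ × ℝ => q.2 + q.1)
  have d1 : ∀ y, HasDerivAt (fun y => z y + w y) (deriv (fun y => z y + w y) y) y := fun y =>
    ((hz.add hw).differentiable (by simp) y).hasDerivAt
  have d2 : ∀ y, HasDerivAt (fun y => z y - w y) (deriv (fun y => z y - w y) y) y := fun y =>
    ((hz.sub hw).differentiable (by simp) y).hasDerivAt
  set a := deriv (fun y => z y + w y) with ha
  set b := deriv (fun y => z y - w y) with hb
  have a_t : ∀ t x, HasDerivAt (fun t => z (x - t) + w (x - t)) (-a (x - t)) t := fun t x => by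
    have := (d1 (x - t)).comp t ((hasDerivAt_id t).const_sub x)
    simpa [Function.comp_def] using this
  have a_x : ∀ t x, HasDerivAt (fun x => z (x - t) + w (x - t)) (a (x - t)) x := fun t x => by
    have := (d1 (x - t)).comp x ((hasDerivAt_id x).sub_const t)
    simpa [Function.comp_def] using this
  have b_t : ∀ t x, HasDerivAt (fun t => z (x + t) - w (x + t)) (b (x + t)) t := fun t x => by
    have := (d2 (x + t)).comp t ((hasDerivAt_id t).const_add x)
    simpa [Function.comp_def] using this
  have b_x : ∀ t x, HasDerivAt (fun x => z (x + t) - w (x + t)) (b (x + t)) x := fun t x => by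
    have := (d2 (x + t)).comp x ((hasDerivAt_id x).add_const t)
    simpa [Function.comp_def] using this
  have Zt : ∀ t x, pt Z t x = 1 / 2 * (-a (x - t) + b (x + t) + pt G t x - pt H t x) :=
    fun t x => by
      rw [hZ']
      exact (((((a_t t x).add (b_t t x)).add (hG.hast t x)).sub (hH.hast t x)).const_mul _).deriv
  have Zx : ∀ t x, px Z t x = 1 / 2 * (a (x - t) + b (x + t) + px G t x - px H t x) :=
    fun t x => by
      rw [hZ']
      exact (((((a_x t x).add (b_x t x)).add (hG.hasx t x)).sub (hH.hasx t x)).const_mul _).deriv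
  have Vt : ∀ t x, pt V t x = 1 / 2 * (-a (x - t) - b (x + t) + pt G t x + pt H t x) :=
    fun t x => by
      rw [hV']
      exact (((((a_t t x).sub (b_t t x)).add (hG.hast t x)).add (hH.hast t x)).const_mul _).deriv
  have Vx : ∀ t x, px V t x = 1 / 2 * (a (x - t) - b (x + t) + px G t x + px H t x) :=
    fun t x => by
      rw [hV']
      exact (((((a_x t x).sub (b_x t x)).add (hG.hasx t x)).add (hH.hasx t x)).const_mul _).deriv
  refine ⟨?_, ?_, fun t x => ?_, fun t x => ?_⟩
  · rw [hZ']; exact (Sm.const _).mul (((h1.add h2).add hG).sub hH)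
  · rw [hV']; exact (Sm.const _).mul (((h1.sub h2).add hG).add hH)
  · rw [Zt, Vx, hGt, hHt]; ring
  · rw [Vt, Zx, hGt, hHt]; ring

lemma exists_bound_box (n : ℕ) (P : (Fin n → ℝ) → ℝ) (hP : Continuous P) (K : ℝ) :
    ∃ C > 0, ∀ p : Fin n → ℝ, (∀ i, |p i| ≤ K) → |P p| ≤ C := by
  obtain ⟨C, hC⟩ := (isCompact_univ_pi fun _ : Fin n =>
    isCompact_Icc (a := -K) (b := K)).exists_bound_of_continuousOn hP.continuousOn
  refine ⟨max C 1, by positivity, fun p hp => ?_⟩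
  exact (hC p fun i _ => abs_le.1 (hp i)).trans (le_max_left _ _)

/-- Remainder of the first equation, divided by `ε ^ 3`. -/
noncomputable def R1 (e a ax A Ax b bx B Bx : ℝ) : ℝ :=
  ax * B + a * Bx + Ax * b + A * bx + e ^ 2 * (Ax * B + A * Bx)

/-- Remainder of the second equation, divided by `ε ^ 3`. -/
noncomputable def R2 (e r a ax A Ax b bx bxx bxxx B Bx Bxx Bxxx cx cxx Dx Dxx Dxxxx : ℝ) : ℝ :=
  -(1 / 3) * Dxx
  - 2 / 3 * e * (a * Dxx + A * (cxx + e ^ 2 * Dxx))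
  - e * (ax * Dx + Ax * (cx + e ^ 2 * Dx))
  + r * (a + e ^ 2 * A) * (2 / 3 * (a + e ^ 2 * A) * (cxx + e ^ 2 * Dxx)
      + (ax + e ^ 2 * Ax) * (cx + e ^ 2 * Dx))
  - 1 / 45 * e * Dxxxx
  + (b * Bx + B * bx + e ^ 2 * B * Bx)
  - 1 / 3 * e * (b * Bxxx + B * (bxxx + e ^ 2 * Bxxx) - (bx * Bxx + Bx * (bxx + e ^ 2 * Bxx)))

lemma R1_bound (K : ℝ) : ∃ C > 0, ∀ e a ax A Ax b bx B Bx : ℝ,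
    |e| ≤ K → |a| ≤ K → |ax| ≤ K → |A| ≤ K → |Ax| ≤ K → |b| ≤ K → |bx| ≤ K → |B| ≤ K →
    |Bx| ≤ K → |R1 e a ax A Ax b bx B Bx| ≤ C := by
  obtain ⟨C, hC, h⟩ := exists_bound_box 9
    (fun p => R1 (p 0) (p 1) (p 2) (p 3) (p 4) (p 5) (p 6) (p 7) (p 8))
    (by unfold R1; fun_prop) K
  refine ⟨C, hC, fun e a ax A Ax b bx B Bx h0 h1 h2 h3 h4 h5 h6 h7 h8 => ?_⟩
  refine h ![e, a, ax, A, Ax, b, bx, B, Bx] fun i => ?_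
  fin_cases i <;> assumption

lemma R2_bound (K : ℝ) : ∃ C > 0,
    ∀ e r a ax A Ax b bx bxx bxxx B Bx Bxx Bxxx cx cxx Dx Dxx Dxxxx : ℝ,
    |e| ≤ K → |r| ≤ K → |a| ≤ K → |ax| ≤ K → |A| ≤ K → |Ax| ≤ K → |b| ≤ K → |bx| ≤ K →
    |bxx| ≤ K → |bxxx| ≤ K → |B| ≤ K → |Bx| ≤ K → |Bxx| ≤ K → |Bxxx| ≤ K → |cx| ≤ K →
    |cxx| ≤ K → |Dx| ≤ K → |Dxx| ≤ K → |Dxxxx| ≤ K →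
    |R2 e r a ax A Ax b bx bxx bxxx B Bx Bxx Bxxx cx cxx Dx Dxx Dxxxx| ≤ C := by
  obtain ⟨C, hC, h⟩ := exists_bound_box 19
    (fun p => R2 (p 0) (p 1) (p 2) (p 3) (p 4) (p 5) (p 6) (p 7) (p 8) (p 9) (p 10) (p 11)
      (p 12) (p 13) (p 14) (p 15) (p 16) (p 17) (p 18))
    (by unfold R2; fun_prop) K
  refine ⟨C, hC, fun e r a ax A Ax b bx bxx bxxx B Bx Bxx Bxxx cx cxx Dx Dxx Dxxxx
    h0 h1 h2 h3 h4 h5 h6 h7 h8 h9 h10 h11 h12 h13 h14 h15 h16 h17 h18 => ?_⟩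
  refine h ![e, r, a, ax, A, Ax, b, bx, bxx, bxxx, B, Bx, Bxx, Bxxx, cx, cxx, Dx, Dxx, Dxxxx]
    fun i => ?_
  fin_cases i <;> assumption

/-- The algebraic expansion of the second residual. -/
lemma R2_identity (e r a ax A Ax b bx bxx bxxx B Bx Bxx Bxxx c cx cxx cxxxx
      D Dx Dxx Dxxxx : ℝ)
    (hr : r * (1 + e * (a + e ^ 2 * A)) = 1)
    (h1 : c - e / 3 * cxx + ax + e * b * bx = 0)
    (h2 : D + Ax = ax * cx + 2 / 3 * a * cxx + 1 / 45 * cxxxx + 1 / 3 * (b * bxxx - bx * bxx)) :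
    c + e ^ 2 * D
      - e / 3 * r * (3 * e * (ax + e ^ 2 * Ax) * (cx + e ^ 2 * Dx)
          + (1 + 3 * e * (a + e ^ 2 * A)) * (cxx + e ^ 2 * Dxx))
      - e ^ 2 / 45 * (cxxxx + e ^ 2 * Dxxxx)
      + (ax + e ^ 2 * Ax) + e * (b + e ^ 2 * B) * (bx + e ^ 2 * Bx)
      - e ^ 2 / 3 * ((b + e ^ 2 * B) * (bxxx + e ^ 2 * Bxxx)
          - (bx + e ^ 2 * Bx) * (bxx + e ^ 2 * Bxx))
    = R2 e r a ax A Ax b bx bxx bxxx B Bx Bxx Bxxx cx cxx Dx Dxx Dxxxx * e ^ 3 := by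
  unfold R2
  set z := a + e ^ 2 * A with hz
  set zx := ax + e ^ 2 * Ax with hzx
  set wx := cx + e ^ 2 * Dx with hwx
  set wxx := cxx + e ^ 2 * Dxx with hwxx
  have hmain : e / 3 * r * (3 * e * zx * wx + (1 + 3 * e * z) * wxx)
      = e / 3 * wxx + 2 / 3 * e ^ 2 * z * wxx + e ^ 2 * zx * wx
        - e ^ 3 * r * z * (2 / 3 * z * wxx + zx * wx) := by
    linear_combination (e / 3 * wxx + 2 / 3 * e ^ 2 * z * wxx + e ^ 2 * zx * wx) * hr
  rw [hmain, hz, hzx, hwx, hwxx]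
  linear_combination h1 + e ^ 2 * h2

theorem explicit_solution_with_correctors (M : ℝ) (hM : 0 < M) :
    ∃ C > (0:ℝ), ∀ ε T : ℝ, 0 < ε → ε ≤ 1 → 0 < T →
      ∀ ζ₁ v₁ : ℝ → ℝ → ℝ, ∀ ζ₂₀ v₂₀ : ℝ → ℝ,
      ContDiff ℝ (⊤ : ℕ∞) (Function.uncurry ζ₁) → ContDiff ℝ (⊤ : ℕ∞) (Function.uncurry v₁) →
      ContDiff ℝ (⊤ : ℕ∞) ζ₂₀ → ContDiff ℝ (⊤ : ℕ∞) v₂₀ →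
      -- (ζ₁, v₁) solves the standard Boussinesq system exactly
      (∀ t ∈ Set.Icc (0:ℝ) T, ∀ x : ℝ,
        pt ζ₁ t x + px (fun t x => (1 + ε * ζ₁ t x) * v₁ t x) t x = 0) →
      (∀ t ∈ Set.Icc (0:ℝ) T, ∀ x : ℝ,
        pt v₁ t x - ε / 3 * px (px (pt v₁)) t x + px ζ₁ t x
          + ε * v₁ t x * px v₁ t x = 0) →
      let f : ℝ → ℝ → ℝ := fun t x =>
        px ζ₁ t x * px (pt v₁) t x
          + 2 / 3 * ζ₁ t x * px (px (pt v₁)) t x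
          + 1 / 45 * px (px (px (px (pt v₁)))) t x
          + 1 / 3 * px (fun t x => v₁ t x * px (px v₁) t x - (px v₁ t x) ^ 2) t x
      let ζ₂ : ℝ → ℝ → ℝ := fun t x =>
        (1 / 2) * ((ζ₂₀ (x - t) + v₂₀ (x - t)) + (ζ₂₀ (x + t) - v₂₀ (x + t))
          + (∫ s in (0:ℝ)..t, f s (x - t + s)) - ∫ s in (0:ℝ)..t, f s (x + t - s))
      let v₂ : ℝ → ℝ → ℝ := fun t x =>
        (1 / 2) * ((ζ₂₀ (x - t) + v₂₀ (x - t)) - (ζ₂₀ (x + t) - v₂₀ (x + t))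
          + (∫ s in (0:ℝ)..t, f s (x - t + s)) + ∫ s in (0:ℝ)..t, f s (x + t - s))
      let ζ : ℝ → ℝ → ℝ := fun t x => ζ₁ t x + ε ^ 2 * ζ₂ t x
      let v : ℝ → ℝ → ℝ := fun t x => v₁ t x + ε ^ 2 * v₂ t x
      -- all partial derivatives of total order ≤ 6 bounded by M
      (∀ n : ℕ, n ≤ 6 → ∀ t ∈ Set.Icc (0:ℝ) T, ∀ x : ℝ,
        ‖iteratedFDeriv ℝ n (Function.uncurry ζ₁) (t, x)‖ ≤ M ∧
        ‖iteratedFDeriv ℝ n (Function.uncurry v₁) (t, x)‖ ≤ M ∧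
        ‖iteratedFDeriv ℝ n (Function.uncurry ζ₂) (t, x)‖ ≤ M ∧
        ‖iteratedFDeriv ℝ n (Function.uncurry v₂) (t, x)‖ ≤ M) →
      -- nonvanishing depth
      (∀ t ∈ Set.Icc (0:ℝ) T, ∀ x : ℝ, 1 + ε * ζ t x ≥ 1 / 2) →
      -- conclusion: initial data and O(ε³) residuals for both equations
      (∀ x : ℝ, ζ 0 x = ζ₁ 0 x + ε ^ 2 * ζ₂₀ x ∧ v 0 x = v₁ 0 x + ε ^ 2 * v₂₀ x) ∧
      (∀ t ∈ Set.Icc (0:ℝ) T, ∀ x : ℝ,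
        |pt ζ t x + px (fun t x => (1 + ε * ζ t x) * v t x) t x| ≤ C * ε ^ 3 ∧
        |pt v t x
          - ε / (3 * (1 + ε * ζ t x))
              * px (fun t x => (1 + 3 * ε * ζ t x) * px (pt v) t x) t x
          - ε ^ 2 / 45 * px (px (px (px (pt v)))) t x
          + px ζ t x + ε * v t x * px v t x
          - ε ^ 2 / 3 * px (fun t x => v t x * px (px v) t x - (px v t x) ^ 2) t x|
        ≤ C * ε ^ 3) := by
  obtain ⟨C1, hC1, hR1⟩ := R1_bound (M + 2)
  obtain ⟨C2, hC2, hR2⟩ := R2_bound (M + 2)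
  refine ⟨max C1 C2, lt_max_of_lt_left hC1, ?_⟩
  intro ε T hε hε1 hT ζ₁ v₁ ζ₂₀ v₂₀ hζ₁ hv₁ hζ₂₀ hv₂₀ eq1 eq2 f ζ₂ v₂ ζ v hB hdepth
  have sζ₁ : Sm ζ₁ := hζ₁
  have sv₁ : Sm v₁ := hv₁
  have hfS : Sm f := by
    have sQ : Sm (fun t x => v₁ t x * px (px v₁) t x - (px v₁ t x) ^ 2) :=
      (sv₁.mul sv₁.px.px).sub (sv₁.px.pow 2)
    exact (((sζ₁.px.mul sv₁.pt.px).add (((Sm.const _).mul sζ₁).mul sv₁.pt.px.px)).add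
      ((Sm.const _).mul sv₁.pt.px.px.px.px)).add ((Sm.const _).mul sQ.px)
  obtain ⟨sζ₂, sv₂, lin1, lin2⟩ := dalembert f hfS ζ₂₀ v₂₀ hζ₂₀ hv₂₀ ζ₂ v₂ rfl rfl
  have sζ : Sm ζ := sζ₁.add ((Sm.const _).mul sζ₂)
  have sv : Sm v := sv₁.add ((Sm.const _).mul sv₂)
  have hf : ∀ t x, f t x = px ζ₁ t x * px (pt v₁) t x + 2 / 3 * ζ₁ t x * px (px (pt v₁)) t x
      + 1 / 45 * px (px (px (px (pt v₁)))) t x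
      + 1 / 3 * (v₁ t x * px (px (px v₁)) t x - px v₁ t x * px (px v₁) t x) := fun t x => by
    rw [← px_Q sv₁]
  have ptζ : pt ζ = fun t x => pt ζ₁ t x + ε ^ 2 * pt ζ₂ t x := pt_lin sζ₁ sζ₂ _
  have pxζ : px ζ = fun t x => px ζ₁ t x + ε ^ 2 * px ζ₂ t x := px_lin sζ₁ sζ₂ _
  have ptv : pt v = fun t x => pt v₁ t x + ε ^ 2 * pt v₂ t x := pt_lin sv₁ sv₂ _
  have pxv : px v = fun t x => px v₁ t x + ε ^ 2 * px v₂ t x := px_lin sv₁ sv₂ _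
  have pxxv : px (px v) = fun t x => px (px v₁) t x + ε ^ 2 * px (px v₂) t x := by
    rw [pxv]; exact px_lin sv₁.px sv₂.px _
  have pxxxv : px (px (px v)) = fun t x => px (px (px v₁)) t x + ε ^ 2 * px (px (px v₂)) t x := by
    rw [pxxv]; exact px_lin sv₁.px.px sv₂.px.px _
  have w1 : px (pt v) = fun t x => px (pt v₁) t x + ε ^ 2 * px (pt v₂) t x := by
    rw [ptv]; exact px_lin sv₁.pt sv₂.pt _
  have w2 : px (px (pt v)) = fun t x => px (px (pt v₁)) t x + ε ^ 2 * px (px (pt v₂)) t x := by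
    rw [w1]; exact px_lin sv₁.pt.px sv₂.pt.px _
  have w4 : px (px (px (px (pt v)))) = fun t x =>
      px (px (px (px (pt v₁)))) t x + ε ^ 2 * px (px (px (px (pt v₂)))) t x := by
    rw [w2, px_lin sv₁.pt.px.px sv₂.pt.px.px]
    exact px_lin sv₁.pt.px.px.px sv₂.pt.px.px.px _
  refine ⟨fun x => ⟨?_, ?_⟩, fun t ht x => ?_⟩
  · simp only [ζ, ζ₂, intervalIntegral.integral_same, sub_zero, add_zero]
    ring
  · simp only [v, v₂, intervalIntegral.integral_same, sub_zero, add_zero]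
    ring
  have bζ₁ : Bd (M + 2) 6 (t, x) ζ₁ := fun k hk => (hB k hk t ht x).1.trans (by linarith)
  have bv₁ : Bd (M + 2) 6 (t, x) v₁ := fun k hk => (hB k hk t ht x).2.1.trans (by linarith)
  have bζ₂ : Bd (M + 2) 6 (t, x) ζ₂ := fun k hk => (hB k hk t ht x).2.2.1.trans (by linarith)
  have bv₂ : Bd (M + 2) 6 (t, x) v₂ := fun k hk => (hB k hk t ht x).2.2.2.trans (by linarith)
  have hd := hdepth t ht x
  have e1 := eq1 t ht x
  have e2 := eq2 t ht x
  have l1 := lin1 t x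
  have l2 := lin2 t x
  rw [hf] at l2
  rw [px_flux sζ₁ sv₁] at e1
  rw [px_flux sζ sv, px_flux sζ sv.pt.px, px_Q sv, ptζ, pxζ, pxxxv, pxxv, pxv, w4, w2, w1, ptv]
  have hζv : ζ t x = ζ₁ t x + ε ^ 2 * ζ₂ t x := rfl
  have hvv : v t x = v₁ t x + ε ^ 2 * v₂ t x := rfl
  rw [hζv] at hd ⊢
  rw [hvv]
  clear_value f ζ₂ v₂ ζ v
  have hε' : |ε| ≤ M + 2 := by rw [abs_of_pos hε]; linarith
  have hh : 0 < 1 + ε * (ζ₁ t x + ε ^ 2 * ζ₂ t x) := by linarith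
  have hr : |1 / (1 + ε * (ζ₁ t x + ε ^ 2 * ζ₂ t x))| ≤ M + 2 := by
    rw [abs_of_pos (by positivity), div_le_iff₀ hh]
    nlinarith
  have hr1 : 1 / (1 + ε * (ζ₁ t x + ε ^ 2 * ζ₂ t x)) * (1 + ε * (ζ₁ t x + ε ^ 2 * ζ₂ t x)) = 1 :=
    one_div_mul_cancel hh.ne'
  have hdiv : ε / (3 * (1 + ε * (ζ₁ t x + ε ^ 2 * ζ₂ t x)))
      = ε / 3 * (1 / (1 + ε * (ζ₁ t x + ε ^ 2 * ζ₂ t x))) := by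
    rw [div_mul_div_comm, mul_one]
  have fin : ∀ R C : ℝ, |R| ≤ C → C ≤ max C1 C2 → |R * ε ^ 3| ≤ max C1 C2 * ε ^ 3 := by
    intro R C h1 h2
    rw [abs_mul, abs_of_pos (pow_pos hε 3)]
    exact mul_le_mul_of_nonneg_right (h1.trans h2) (pow_pos hε 3).le
  constructor
  · have := fin _ C1 (hR1 ε (ζ₁ t x) (px ζ₁ t x) (ζ₂ t x) (px ζ₂ t x) (v₁ t x) (px v₁ t x)
      (v₂ t x) (px v₂ t x) hε' bζ₁.abs_le (bζ₁.px sζ₁).abs_le bζ₂.abs_le (bζ₂.px sζ₂).abs_le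
      bv₁.abs_le (bv₁.px sv₁).abs_le bv₂.abs_le (bv₂.px sv₂).abs_le) (le_max_left _ _)
    refine (congrArg abs ?_).trans_le this
    unfold R1
    linear_combination e1 + ε ^ 2 * l1
  · have := fin _ C2 (hR2 ε _ (ζ₁ t x) (px ζ₁ t x) (ζ₂ t x) (px ζ₂ t x) (v₁ t x) (px v₁ t x)
      (px (px v₁) t x) (px (px (px v₁)) t x)
      (v₂ t x) (px v₂ t x) (px (px v₂) t x) (px (px (px v₂)) t x)
      (px (pt v₁) t x) (px (px (pt v₁)) t x) (px (pt v₂) t x) (px (px (pt v₂)) t x)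
      (px (px (px (px (pt v₂)))) t x)
      hε' hr bζ₁.abs_le (bζ₁.px sζ₁).abs_le bζ₂.abs_le (bζ₂.px sζ₂).abs_le
      bv₁.abs_le (bv₁.px sv₁).abs_le ((bv₁.px sv₁).px sv₁.px).abs_le
      (((bv₁.px sv₁).px sv₁.px).px sv₁.px.px).abs_le
      bv₂.abs_le (bv₂.px sv₂).abs_le ((bv₂.px sv₂).px sv₂.px).abs_le
      (((bv₂.px sv₂).px sv₂.px).px sv₂.px.px).abs_le
      ((bv₁.pt sv₁).px sv₁.pt).abs_le (((bv₁.pt sv₁).px sv₁.pt).px sv₁.pt.px).abs_le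
      ((bv₂.pt sv₂).px sv₂.pt).abs_le (((bv₂.pt sv₂).px sv₂.pt).px sv₂.pt.px).abs_le
      (((((bv₂.pt sv₂).px sv₂.pt).px sv₂.pt.px).px sv₂.pt.px.px).px sv₂.pt.px.px.px).abs_le)
      (le_max_right _ _)
    refine (congrArg abs ?_).trans_le this
    rw [hdiv]
    exact R2_identity _ _ _ _ _ _ _ _ _ _ _ _ _ _ _ _ _ _ _ _ _ _ hr1 e2 l2
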